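/- Let s ≥ 7 and set A(c) = 7c/(30Q) + 1 − 7/(10Q). Then the function c ↦ OPT(A(c), c, s) is strictly increasing on 1 ≤ c < 3. -/

import Mathlib

/-- `q(x) = exp(x) - x - 1`. -/
noncomputable def q (x : ℝ) : ℝ := Real.exp x - x - 1

/-- `Q(x) = x·(exp(x) − 1)/(exp(x) − x − 1)`. -/
noncomputable def Qf (x : ℝ) : ℝ := x * (Real.exp x - 1) / (Real.exp x - x - 1)

/-- `OPT(a,c,s) = (3·q(sa)/q(s) + 1)·(1/(1+ac))^Q·((1+c)^Q + 3·(1−c/3)^Q)` with `Q = Q(s)`. -/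
noncomputable def OPT4 (a c s : ℝ) : ℝ :=
  (3 * q (s*a) / q s + 1) * (1/(1+a*c)) ^ (Qf s) *
  ((1+c) ^ (Qf s) + 3 * (1 - c/3) ^ (Qf s))

lemma q_pos' {x : ℝ} (hx : 0 < x) : 0 < q x := by
  unfold q
  have := Real.add_one_lt_exp hx.ne'
  linarith

lemma Qf_ge {s : ℝ} (hs : 7 ≤ s) : 7 ≤ Qf s := by
  have h := q_pos' (x := s) (by linarith)
  unfold q at h
  unfold Qf
  rw [le_div_iff₀ h]
  nlinarith

/-- The tail term `Q t^(Q-1)` is small. -/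
lemma tail_bound {Q t y : ℝ} (hQ : 7 ≤ Q) (ht : 0 < t) (ht3 : t ≤ 1/3) (hy : t ≤ y/6) :
    Q * t ^ (Q - 1) ≤ 7 * (y / 1458) := by
  have h1 : t ^ (Q-1) = t ^ (6:ℕ) * t ^ (Q-7) := by
    rw [← Real.rpow_natCast, ← Real.rpow_add ht]
    congr 1
    push_cast
    ring
  have h2 : t ^ (Q-7) ≤ (1/3:ℝ) ^ (Q-7) :=
    Real.rpow_le_rpow ht.le ht3 (by linarith)
  have h3 : 1 + (Q-7) * 1 ≤ (3:ℝ) ^ (Q-7) := by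
    have e1 : Real.exp 1 ≤ 3 := by linarith [Real.exp_one_lt_d9]
    have e2 : Real.exp 1 ^ (Q-7) ≤ (3:ℝ) ^ (Q-7) :=
      Real.rpow_le_rpow (Real.exp_pos _).le e1 (by linarith)
    rw [← Real.exp_mul] at e2
    have := Real.add_one_le_exp (1 * (Q-7))
    linarith
  have h4 : (1/3:ℝ) ^ (Q-7) * (3:ℝ) ^ (Q-7) = 1 := by
    rw [← Real.mul_rpow (by norm_num) (by norm_num)]
    norm_num
  have h5 : 0 < (1/3:ℝ) ^ (Q-7) := by positivity
  have h6 : Q * t ^ (Q-7) ≤ 7 := by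
    have : Q * (1/3:ℝ) ^ (Q-7) ≤ 7 := by
      have hq : Q ≤ 7 * (3:ℝ) ^ (Q-7) := by linarith
      have := mul_le_mul_of_nonneg_right hq h5.le
      nlinarith
    have := mul_le_mul_of_nonneg_left h2 (show 0 ≤ Q by linarith)
    linarith
  have h7 : t ^ (6:ℕ) ≤ y / 1458 := by
    have : t ^ 5 ≤ (1/3:ℝ)^5 := by gcongr
    have h8 : t ^ 6 = t ^ 5 * t := by ring
    rw [h8]
    calc t ^ 5 * t ≤ (1/3:ℝ)^5 * (y/6) := by gcongr
      _ = y / 1458 := by ring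
  rw [h1]
  have h9 : 0 ≤ t ^ 6 := by positivity
  have := mul_le_mul_of_nonneg_left h6 h9
  nlinarith

lemma S_bound {Q c : ℝ} (hQ : 7 ≤ Q) (hc : 1 ≤ c) (hc3 : c < 3) :
    Q / (1+c) - 14 * ((3-c)/1458) / (1+c) ≤
     (Q * (1+c) ^ (Q-1) - Q * (1-c/3) ^ (Q-1)) / ((1+c) ^ Q + 3 * (1-c/3) ^ Q) := by
  have hp : 0 < 1 + c := by linarith
  have hw : 0 < 1 - c/3 := by linarith
  have ht : 0 < (1-c/3)/(1+c) := by positivity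
  have hb := tail_bound (y := 3 - c) hQ ht (by rw [div_le_iff₀ hp]; linarith)
    (by rw [div_le_iff₀ hp]; nlinarith)
  rw [Real.div_rpow hw.le hp.le] at hb
  have e1 : (1+c) ^ Q = (1+c) ^ (Q-1) * (1+c) := by
    rw [Real.rpow_sub_one hp.ne']; field_simp
  have e2 : (1-c/3) ^ Q = (1-c/3) ^ (Q-1) * (1-c/3) := by
    rw [Real.rpow_sub_one hw.ne', div_mul_cancel₀ _ hw.ne']
  rw [e1, e2]
  have hX : 0 < (1+c) ^ (Q-1) := by positivity
  have hY : 0 < (1-c/3) ^ (Q-1) := by positivity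
  generalize (1+c) ^ (Q-1) = X at *
  generalize (1-c/3) ^ (Q-1) = Y at *
  have hb' : Q * Y ≤ 7 * ((3-c)/1458) * X := by
    rw [← mul_div_assoc, div_le_iff₀ hX] at hb
    exact hb
  rw [← sub_div, div_le_div_iff₀ hp (by positivity)]
  have hQY : 0 ≤ Q * Y := by positivity
  have k1 : Q * Y * (3 * (1 - c/3)) ≤ Q * Y * (1+c) :=
    mul_le_mul_of_nonneg_left (by linarith) hQY
  have k2 := mul_le_mul_of_nonneg_right hb' hp.le
  have k3 : 0 ≤ 14 * ((3-c)/1458) * (3 * (Y * (1-c/3))) := by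
    have : 0 < 3 - c := by linarith
    positivity
  nlinarith

lemma T_bound {s v x : ℝ} (hs : 7 ≤ s) (hv : 0 ≤ v) (hv1 : v ≤ 1/2)
    (hx : x = s - v * (q s / (Real.exp s - 1))) :
    3 * (1-v) / (4 - 3*v) ≤
      3 * (Real.exp x - 1) / (Real.exp s - 1) / (3 * q x / q s + 1) := by
  have hq := q_pos' (x := s) (by linarith)
  have he : 0 < Real.exp s - 1 := by unfold q at hq; linarith
  have hr1 : q s / (Real.exp s - 1) ≤ 1 := by
    rw [div_le_one he]; unfold q; linarith
  have hr0 : 0 < q s / (Real.exp s - 1) := by positivity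
  have hx0 : 0 < x := by nlinarith
  have hxs : x ≤ s := by nlinarith
  have hqx := q_pos' hx0
  have hL : 1 - v ≤ (Real.exp x - 1) / (Real.exp s - 1) := by
    rw [le_div_iff₀ he]
    have h1 : Real.exp x = Real.exp s * Real.exp (-(v * (q s / (Real.exp s - 1)))) := by
      rw [← Real.exp_add, hx]; congr 1
    have h2 := Real.add_one_le_exp (-(v * (q s / (Real.exp s - 1))))
    have h3 := mul_le_mul_of_nonneg_left h2 (Real.exp_pos s).le
    rw [← h1] at h3
    have h4 : Real.exp s * (q s / (Real.exp s - 1)) ≤ Real.exp s - 1 := by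
      rw [← mul_div_assoc, div_le_iff₀ he]
      unfold q
      nlinarith [Real.exp_pos s]
    have h5 := mul_le_mul_of_nonneg_left h4 hv
    nlinarith
  have hRL : q x / q s ≤ (Real.exp x - 1) / (Real.exp s - 1) := by
    rw [div_le_div_iff₀ hq he]
    have hs0 : 0 < s := by linarith
    have hc := convexOn_exp.2 (Set.mem_univ s) (Set.mem_univ 0)
      (show 0 ≤ x / s by positivity) (show 0 ≤ 1 - x/s by
        rw [sub_nonneg, div_le_one hs0]; exact hxs) (by ring)
    simp only [smul_eq_mul, mul_zero, add_zero, Real.exp_zero, mul_one] at hc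
    rw [div_mul_cancel₀ _ hs0.ne'] at hc
    have h6 : s * (Real.exp x - 1) ≤ x * (Real.exp s - 1) := by
      have := mul_le_mul_of_nonneg_left hc hs0.le
      have h7 : s * (x / s * Real.exp s + (1 - x/s)) = x * Real.exp s + s - x := by
        field_simp
        ring
      rw [h7] at this
      linarith
    unfold q
    nlinarith
  have hR0 : 0 < q x / q s := by positivity
  rw [mul_div_assoc 3 (Real.exp x - 1), mul_div_assoc 3 (q x)]
  generalize (Real.exp x - 1) / (Real.exp s - 1) = L at *
  generalize q x / q s = R at *
  rw [div_le_div_iff₀ (by linarith) (by linarith)]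
  nlinarith

lemma final_ineq {Q c δ A : ℝ} (hQ : 7 ≤ Q) (hδ : δ = 7 / (30*Q)) (hA : A = 1 - δ * (3-c))
    (hc : 1 ≤ c) (hc3 : c < 3) :
    0 < 7/30 * (3 * (1 - 7/30*(3-c)) / (4 - 3*(7/30*(3-c)))) - Q * ((A + c*δ)/(1+A*c))
      + (Q / (1+c) - 14 * ((3-c)/1458) / (1+c)) := by
  have hQ0 : 0 < Q := by linarith
  have hQδ : Q * δ = 7/30 := by rw [hδ]; field_simp
  have hδ0 : 0 < δ := by rw [hδ]; positivity
  have hδ1 : δ ≤ 1/30 := by nlinarith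
  have hy : 0 < 3 - c := by linarith
  have hD : 1 + c - (3-c)*c/30 ≤ 1 + A * c := by
    rw [hA]
    nlinarith [mul_le_mul_of_nonneg_right hδ1 (show 0 ≤ (3-c)*c by nlinarith)]
  have hD0 : 0 < 1 + c - (3-c)*c/30 := by nlinarith
  have hp : 0 < 1 + c := by linarith
  have hD1 : 0 < 1 + A * c := by linarith
  have e : Q / (1+c) - Q * ((A + c*δ)/(1+A*c)) = - (7/30 * ((c-1)*(c+3) / ((1+c)*(1+A*c)))) := by
    rw [← hQδ]
    have hne := hD1.ne'
    have hne' := hp.ne'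
    rw [← mul_div_assoc, div_sub_div _ _ hne' hne, ← mul_div_assoc, ← neg_div]
    congr 1
    rw [hA]
    ring
  have h1 : (c-1)*(c+3) / ((1+c)*(1+A*c)) ≤ (c-1)*(c+3) / ((1+c)*(1 + c - (3-c)*c/30)) := by
    have : 0 ≤ (c-1)*(c+3) := by nlinarith
    gcongr
  have h2 : 0 < 7/30 * (3 * (1 - 7/30*(3-c)) / (4 - 3*(7/30*(3-c)))) -
      7/30 * ((c-1)*(c+3) / ((1+c)*(1 + c - (3-c)*c/30))) - 14 * ((3-c)/1458) / (1+c) := by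
    have hE : 0 < 4 - 3*(7/30*(3-c)) := by linarith
    have key : 7/30 * (3 * (1 - 7/30*(3-c)) / (4 - 3*(7/30*(3-c)))) -
      7/30 * ((c-1)*(c+3) / ((1+c)*(1 + c - (3-c)*c/30))) - 14 * ((3-c)/1458) / (1+c)
      = (7/30 * (3 * (1 - 7/30*(3-c))) * (1+c) * (1 + c - (3-c)*c/30)
        - 7/30 * ((c-1)*(c+3)) * (4 - 3*(7/30*(3-c)))
        - 14 * ((3-c)/1458) * (4 - 3*(7/30*(3-c))) * (1 + c - (3-c)*c/30)) /
        ((4 - 3*(7/30*(3-c))) * (1+c) * (1 + c - (3-c)*c/30)) := by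
      generalize 1 + c - (3-c)*c/30 = D at *
      generalize hEE : 4 - 3*(7/30*(3-c)) = E at *
      field_simp
    rw [key]
    apply div_pos _ (by positivity)
    obtain ⟨y, rfl⟩ : ∃ y, c = 3 - y := ⟨3 - c, by ring⟩
    have hy0 : 0 < y := by linarith
    have hy2 : y ≤ 2 := by linarith
    have hpos : 0 < y * (2842/3645 + 2611/40500 * y - 153349/2187000 * y^2
        + 12397/2187000 * y^3) := by
      apply mul_pos hy0
      have : 0 < y ^ 3 := by positivity
      nlinarith
    have heq : 7/30 * (3 * (1 - 7/30*(3-(3-y)))) * (1+(3-y)) * (1 + (3-y) - (3-(3-y))*(3-y)/30)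
        - 7/30 * (((3-y)-1)*((3-y)+3)) * (4 - 3*(7/30*(3-(3-y))))
        - 14 * ((3-(3-y))/1458) * (4 - 3*(7/30*(3-(3-y)))) * (1 + (3-y) - (3-(3-y))*(3-y)/30)
        = y * (2842/3645 + 2611/40500 * y - 153349/2187000 * y^2
        + 12397/2187000 * y^3) := by ring
    rw [heq]
    exact hpos
  linarith

theorem stmt17 (s : ℝ) (hs : 7 ≤ s) :
    StrictMonoOn (fun c => OPT4 (7*c/(30*Qf s) + 1 - 7/(10*Qf s)) c s)
      (Set.Ico (1:ℝ) 3) := by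
  have hQ := Qf_ge hs
  have hq := q_pos' (x := s) (by linarith)
  have he : 0 < Real.exp s - 1 := by unfold q at hq; linarith
  have hQdef : Qf s = s * (Real.exp s - 1) / q s := rfl
  have hq' : q s / (Real.exp s - 1) = s / Qf s := by
    rw [hQdef]; field_simp
  obtain ⟨Q, hQeq⟩ : ∃ Q, Q = Qf s := ⟨_, rfl⟩
  have hQ0 : 0 < Q := by linarith
  obtain ⟨δ, hδ⟩ : ∃ δ, δ = 7 / (30*Q) := ⟨_, rfl⟩
  have hδ0 : 0 < δ := by rw [hδ]; positivity
  have hδ1 : δ ≤ 1/30 := by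
    rw [hδ, div_le_div_iff₀ (by positivity) (by norm_num)]; linarith
  let A : ℝ → ℝ := fun c => 7*c/(30*Q) + 1 - 7/(10*Q)
  have hA : ∀ c, A c = 1 - δ * (3-c) := by
    intro c; simp only [A, hδ]; field_simp; ring
  have hApos : ∀ c ∈ Set.Ico (1:ℝ) 3, 0 < A c := by
    rintro c ⟨h1, h3⟩
    rw [hA]; nlinarith
  let P : ℝ → ℝ := fun c => 3 * q (s * A c) / q s + 1
  let S : ℝ → ℝ := fun c => (1+c) ^ Q + 3 * (1-c/3) ^ Q
  have hP : ∀ c ∈ Set.Ico (1:ℝ) 3, 0 < P c := by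
    intro c hc
    have := q_pos' (x := s * A c) (mul_pos (by linarith) (hApos c hc))
    simp only [P]; positivity
  have hS : ∀ c ∈ Set.Ico (1:ℝ) 3, 0 < S c := by
    rintro c ⟨h1, h3⟩
    have : 0 < 1 - c/3 := by linarith
    simp only [S]; positivity
  have hW : ∀ c ∈ Set.Ico (1:ℝ) 3, 0 < 1 + A c * c := by
    intro c hc
    have := mul_pos (hApos c hc) (show 0 < c by linarith [hc.1])
    linarith
  let g : ℝ → ℝ := fun c => Real.log (P c) - Q * Real.log (1 + A c * c) + Real.log (S c)
  have hFg : ∀ c ∈ Set.Ico (1:ℝ) 3,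
      OPT4 (7*c/(30*Qf s) + 1 - 7/(10*Qf s)) c s = Real.exp (g c) := by
    intro c hc
    simp only [g]
    rw [Real.exp_add, Real.exp_sub, Real.exp_log (hP c hc), Real.exp_log (hS c hc)]
    rw [mul_comm Q, ← Real.rpow_def_of_pos (hW c hc)]
    unfold OPT4
    rw [← hQeq]
    rw [one_div, Real.inv_rpow (hW c hc).le]
    exact congrArg (· * S c) (div_eq_mul_inv (P c) _).symm
  have hAd : ∀ c, HasDerivAt A δ c := by
    intro c
    have : A = fun c => 1 - δ * (3-c) := funext hA
    rw [this]
    have := (((hasDerivAt_id c).const_sub 3).const_mul δ).const_sub 1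
    simpa using this
  have hqd : ∀ x, HasDerivAt q (Real.exp x - 1) x := by
    intro x
    exact ((Real.hasDerivAt_exp x).sub (hasDerivAt_id x)).sub_const 1
  have hgd : ∀ c ∈ Set.Ico (1:ℝ) 3, HasDerivAt g
      ((3 * ((Real.exp (s * A c) - 1) * (s * δ)) / q s) / P c
        - Q * ((δ * c + A c * 1) / (1 + A c * c))
        + (Q * (1+c) ^ (Q-1) - Q * (1-c/3) ^ (Q-1)) / S c) c := by
    intro c hc
    have hw : 0 < 1 - c/3 := by linarith [hc.2]
    have hp : 0 < 1 + c := by linarith [hc.1]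
    have d1 : HasDerivAt P (3 * ((Real.exp (s * A c) - 1) * (s * δ)) / q s) c :=
      (((HasDerivAt.comp (h₂ := q) c (hqd (s * A c)) ((hAd c).const_mul s)).const_mul 3).div_const (q s)).add_const 1
    have d2 : HasDerivAt (fun c => 1 + A c * c) (δ * c + A c * 1) c :=
      ((hAd c).mul (hasDerivAt_id c)).const_add 1
    have d3 : HasDerivAt (fun c : ℝ => (1+c) ^ Q) (1 * Q * (1+c) ^ (Q-1)) c :=
      ((hasDerivAt_id c).const_add 1).rpow_const (Or.inl hp.ne')
    have d4 : HasDerivAt (fun c : ℝ => (1-c/3) ^ Q) (-(1/3) * Q * (1-c/3) ^ (Q-1)) c :=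
      (((hasDerivAt_id c).div_const 3).const_sub 1).rpow_const (Or.inl hw.ne')
    have d5 : HasDerivAt S (Q * (1+c) ^ (Q-1) - Q * (1-c/3) ^ (Q-1)) c := by
      have := d3.add (d4.const_mul 3)
      have e : Q * (1+c) ^ (Q-1) - Q * (1-c/3) ^ (Q-1) = 1 * Q * (1+c) ^ (Q-1) +
          3 * (-(1/3) * Q * (1-c/3) ^ (Q-1)) := by ring
      rw [e]
      exact this
    exact ((d1.log (hP c hc).ne').sub ((d2.log (hW c hc).ne').const_mul Q)).add
      (d5.log (hS c hc).ne')
  have hmono : StrictMonoOn g (Set.Ico (1:ℝ) 3) := by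
    apply strictMonoOn_of_deriv_pos (convex_Ico 1 3)
    · intro c hc
      exact (hgd c hc).continuousAt.continuousWithinAt
    · intro c hc
      have hc' : c ∈ Set.Ico (1:ℝ) 3 := interior_subset hc
      rw [(hgd c hc').deriv]
      have b1 := S_bound (Q := Q) (by linarith) hc'.1 hc'.2
      have b2 := T_bound (s := s) (v := 7/30*(3-c)) (x := s * A c) hs (by linarith [hc'.2])
        (by linarith [hc'.1]) (by
          rw [hq', ← hQeq, hA, hδ]; field_simp)
      have b3 := final_ineq (Q := Q) (c := c) (δ := δ) (A := A c) (by linarith) hδ (hA c) hc'.1 hc'.2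
      have e1 : (3 * ((Real.exp (s * A c) - 1) * (s * δ)) / q s) / P c =
          7/30 * (3 * (Real.exp (s * A c) - 1) / (Real.exp s - 1) / (3 * q (s * A c) / q s + 1)) := by
        change _ / (3 * q (s * A c) / q s + 1) = _
        have hsd : s * δ = 7/30 * (q s / (Real.exp s - 1)) := by
          rw [hq', ← hQeq, hδ]; field_simp
        rw [hsd, ← mul_div_assoc (7/30)]
        have := hq.ne'
        have := he.ne'
        field_simp
      have e2 : (δ * c + A c * 1) = A c + c * δ := by ring
      rw [e1, e2]
      change 0 < _ - _ + _ / ((1+c) ^ Q + 3 * (1-c/3) ^ Q)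
      linarith
  intro a ha b hb hab
  simp only
  rw [hFg a ha, hFg b hb]
  exact Real.exp_lt_exp.mpr (hmono ha hb hab)
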